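/- With the notation and hypotheses of the context (in particular τ(x₀, m₀) = 0 and γ·μ ≠ 0), one has the three-term product identity τ(x₀, m₀ + 1)·τ(x₀ − η, m₀)·τ(x₀ + η, m₀ − 1) = −τ(x₀ − η, m₀ + 1)·τ(x₀, m₀ − 1)·τ(x₀ + η, m₀). -/

import Mathlib

open Matrix

/-!
Write `A = λ₁ - Z`, `B = λ₂ - Z` and `P = adj X'`. Both `A` and `B` have commutator `1 - e fᵀ` with
`X'`, so multiplying a shift such as `X' + B⁻¹`, `X' - A⁻¹` or `X' + A⁻¹ - B⁻¹` by `A` and `B` turns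
it into a rank-one perturbation of a product containing `X'`. As `det X' = 0`, the matrix
determinant lemma evaluates each of the six determinants as a scalar multiple of some `a ⬝ᵥ P *ᵥ b`,
with `a` among `f`, `f adj A`, `f adj B` and `b` among `e`, `adj A e`, `adj B e`. Because `X'` is
singular, `P` has vanishing `2 × 2` minors, so in a product of such values the right-hand vectors
can be permuted freely; this exchanges the two sides of the identity.
-/

section RankOnePerturbation

variable {n R : Type*} [Fintype n] [DecidableEq n] [CommRing R]

theorem det_mul_det_add_vecMulVec (M : Matrix n n R) (u v : n → R) :
    M.det * (M + vecMulVec u v).det = M.det * (M.det + v ⬝ᵥ M.adjugate *ᵥ u) := by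
  let col : Matrix n Unit R := replicateCol Unit u
  let row : Matrix Unit n R := replicateRow Unit v
  have hblock : fromBlocks 1 0 (-(row * M.adjugate)) (M.det • 1) * fromBlocks M (-col) row 1 =
      fromBlocks M (-col) 0 (M.det • 1 + row * M.adjugate * col) := by
    simp [fromBlocks_multiply, Matrix.mul_assoc, adjugate_mul, add_comm]
  have hschur : (fromBlocks M (-col) row 1).det = (M + vecMulVec u v).det := by
    rw [det_fromBlocks_one₂₂, Matrix.neg_mul, sub_neg_eq_add, vecMulVec_eq Unit]
  have hcorner : (M.det • 1 + row * M.adjugate * col).det = M.det + v ⬝ᵥ M.adjugate *ᵥ u := by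
    rw [det_unique, Matrix.mul_assoc, ← replicateCol_mulVec, Matrix.add_apply, Matrix.smul_apply,
      one_apply_eq, smul_eq_mul, mul_one, replicateRow_mul_replicateCol_apply]
  have hdet := congrArg det hblock
  rwa [det_mul, det_fromBlocks_zero₁₂, det_fromBlocks_zero₂₁, hschur, hcorner, det_one, one_mul,
    det_unique, Matrix.smul_apply, one_apply_eq, smul_eq_mul, mul_one] at hdet

open Polynomial in
theorem det_add_vecMulVec (M : Matrix n n R) (u v : n → R) :
    (M + vecMulVec u v).det = M.det + v ⬝ᵥ M.adjugate *ᵥ u := by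
  -- Over `R[X]` the determinant of `X • 1 + M` is monic, hence cancellable; then set `X = 0`.
  let N : Matrix n n R[X] := (X : R[X]) • 1 + M.map C
  have hN : IsRegular N.det := Monic.isRegular (leadingCoeff_det_X_one_add_C M)
  have hN₀ : (evalRingHom 0).mapMatrix N = M := by ext; simp [N]
  have hpert₀ : (evalRingHom 0).mapMatrix (N + vecMulVec (C ∘ u) (C ∘ v)) = M + vecMulVec u v := by
    rw [map_add, hN₀]
    ext
    simp [vecMulVec_apply]
  have hpair₀ : evalRingHom 0 ((C ∘ v) ⬝ᵥ N.adjugate *ᵥ (C ∘ u)) = v ⬝ᵥ M.adjugate *ᵥ u := by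
    rw [← hN₀, ← RingHom.map_adjugate, RingHom.map_dotProduct]
    congr 1 <;> ext <;> simp [mulVec, dotProduct, eval_finsetSum]
  have h := congrArg (evalRingHom 0) (hN.left (det_mul_det_add_vecMulVec N (C ∘ u) (C ∘ v)))
  rwa [map_add, hpair₀, RingHom.map_det, RingHom.map_det, hpert₀, hN₀] at h

theorem vecMul_adjugate_add_vecMulVec (M : Matrix n n R) (u v : n → R) :
    v ᵥ* (M + vecMulVec u v).adjugate = v ᵥ* M.adjugate := by
  refine dotProduct_eq _ _ fun w ↦ ?_
  have h := det_add_vecMulVec (M + vecMulVec u v) w v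
  rw [add_assoc, ← add_vecMulVec, det_add_vecMulVec, det_add_vecMulVec, mulVec_add,
    dotProduct_add] at h
  rw [← dotProduct_mulVec, ← dotProduct_mulVec]
  linear_combination -h

theorem det_add_vecMulVec_smul_adjugate (M : Matrix n n R) (u v : n → R) :
    (M + vecMulVec u v).det • M.adjugate =
      M.det • (M + vecMulVec u v).adjugate + vecMulVec (M.adjugate *ᵥ u) (v ᵥ* M.adjugate) := by
  calc (M + vecMulVec u v).det • M.adjugate
      = M.adjugate * ((M + vecMulVec u v) * (M + vecMulVec u v).adjugate) := by
        rw [mul_adjugate, mul_smul_comm, mul_one]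
    _ = M.adjugate * M * (M + vecMulVec u v).adjugate +
          M.adjugate * (vecMulVec u v * (M + vecMulVec u v).adjugate) := by
        rw [add_mul, mul_add, mul_assoc]
    _ = M.det • (M + vecMulVec u v).adjugate + vecMulVec (M.adjugate *ᵥ u) (v ᵥ* M.adjugate) := by
        rw [adjugate_mul, smul_mul_assoc, one_mul, vecMulVec_mul, vecMul_adjugate_add_vecMulVec,
          mul_vecMulVec]

theorem adjugate_pairing_mul_comm_of_det_eq_zero {M : Matrix n n R} (hM : M.det = 0)
    (a b c d : n → R) :
    (a ⬝ᵥ M.adjugate *ᵥ b) * (c ⬝ᵥ M.adjugate *ᵥ d) =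
      (a ⬝ᵥ M.adjugate *ᵥ d) * (c ⬝ᵥ M.adjugate *ᵥ b) := by
  have h := det_add_vecMulVec_smul_adjugate M b a
  rw [det_add_vecMulVec, hM, zero_add, zero_smul, zero_add] at h
  calc (a ⬝ᵥ M.adjugate *ᵥ b) * (c ⬝ᵥ M.adjugate *ᵥ d)
      = c ⬝ᵥ ((a ⬝ᵥ M.adjugate *ᵥ b) • M.adjugate) *ᵥ d := by
        rw [smul_mulVec, dotProduct_smul, smul_eq_mul]
    _ = (a ⬝ᵥ M.adjugate *ᵥ d) * (c ⬝ᵥ M.adjugate *ᵥ b) := by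
        rw [h, vecMulVec_mulVec, ← dotProduct_mulVec, dotProduct_smul, op_smul_eq_mul, mul_comm]

theorem det_mul_mul_add_smul_vecMulVec {M : Matrix n n R} (hM : M.det = 0) (P Q : Matrix n n R)
    (s : R) (u v : n → R) :
    (P * M * Q + s • vecMulVec u v).det =
      s * ((v ᵥ* Q.adjugate) ⬝ᵥ M.adjugate *ᵥ (P.adjugate *ᵥ u)) := by
  rw [← smul_vecMulVec, det_add_vecMulVec, det_mul, det_mul, hM, mul_zero, zero_mul, zero_add,
    adjugate_mul_distrib, adjugate_mul_distrib, mulVec_smul, dotProduct_smul, smul_eq_mul,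
    ← mulVec_mulVec, ← mulVec_mulVec, dotProduct_mulVec v]

end RankOnePerturbation

section Shift

variable {n R : Type*} [Fintype n] [DecidableEq n] [CommRing R]
  {X A B : Matrix n n R} {e f : n → R}

theorem det_mul_det_add_inv (hX : X.det = 0) (hA : IsUnit A.det)
    (hXA : A * X + 1 = X * A + vecMulVec e f) :
    A.det * (X + A⁻¹).det = (f ᵥ* A.adjugate) ⬝ᵥ X.adjugate *ᵥ e := by
  have hrankOne : A * (X + A⁻¹) = 1 * X * A + (1 : R) • vecMulVec e f := by
    rw [mul_add, mul_nonsing_inv A hA, hXA, one_mul, one_smul]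
  rw [← det_mul, hrankOne, det_mul_mul_add_smul_vecMulVec hX, adjugate_one, one_mulVec, one_mul]

theorem det_mul_det_sub_inv (hX : X.det = 0) (hA : IsUnit A.det)
    (hXA : A * X + 1 = X * A + vecMulVec e f) :
    A.det * (X - A⁻¹).det = -(f ⬝ᵥ X.adjugate *ᵥ (A.adjugate *ᵥ e)) := by
  have hrankOne : (X - A⁻¹) * A = A * X * 1 + (-1 : R) • vecMulVec e f := by
    rw [sub_mul, nonsing_inv_mul A hA, mul_one, neg_one_smul, ← sub_eq_add_neg,
      sub_eq_sub_iff_add_eq_add, hXA]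
  rw [mul_comm, ← det_mul, hrankOne, det_mul_mul_add_smul_vecMulVec hX, adjugate_one, vecMul_one,
    neg_one_mul]

theorem det_mul_det_mul_det_add_inv_sub_inv {c : R} (hX : X.det = 0) (hA : IsUnit A.det)
    (hB : IsUnit B.det) (hXA : A * X + 1 = X * A + vecMulVec e f) (hBA : B = A + c • 1) :
    A.det * B.det * (X + A⁻¹ - B⁻¹).det =
      c * ((f ᵥ* A.adjugate) ⬝ᵥ X.adjugate *ᵥ (B.adjugate *ᵥ e)) := by
  have hrankOne : A * (X + A⁻¹ - B⁻¹) * B = B * X * A + c • vecMulVec e f := by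
    calc A * (X + A⁻¹ - B⁻¹) * B
        = A * X * B + A * A⁻¹ * B - A * (B⁻¹ * B) := by noncomm_ring
      _ = A * X * B + B - A := by
        rw [mul_nonsing_inv A hA, nonsing_inv_mul B hB, one_mul, mul_one]
      _ = A * X * A + c • (A * X + 1) := by
        rw [hBA, mul_add, mul_smul_comm, mul_one, smul_add]
        abel
      _ = B * X * A + c • vecMulVec e f := by
        rw [hXA, hBA, add_mul, add_mul, smul_mul_assoc, smul_mul_assoc, one_mul, smul_add,
          add_assoc]
  rw [← det_mul_mul_add_smul_vecMulVec hX, ← hrankOne, det_mul, det_mul]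
  ring

theorem det_add_inv_three_term_product {c : R} (hX : X.det = 0) (hA : IsUnit A.det)
    (hB : IsUnit B.det) (hXA : A * X + 1 = X * A + vecMulVec e f) (hBA : B = A + c • 1) :
    (X + B⁻¹).det * (X - A⁻¹).det * (X + A⁻¹ - B⁻¹).det =
      -((X + B⁻¹ - A⁻¹).det * (X - B⁻¹).det * (X + A⁻¹).det) := by
  have hXB : B * X + 1 = X * B + vecMulVec e f := by
    rw [hBA, add_mul, mul_add, smul_one_mul, mul_smul_one, add_right_comm, hXA, add_right_comm]
  have hAB : A = B + (-c) • 1 := by rw [hBA, neg_smul, add_neg_cancel_right]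
  have swap := adjugate_pairing_mul_comm_of_det_eq_zero hX
  have h₁ := det_mul_det_add_inv hX hB hXB
  have h₂ := det_mul_det_sub_inv hX hA hXA
  have h₃ := det_mul_det_mul_det_add_inv_sub_inv hX hA hB hXA hBA
  have h₄ := det_mul_det_mul_det_add_inv_sub_inv hX hB hA hXB hAB
  have h₅ := det_mul_det_sub_inv hX hB hXB
  have h₆ := det_mul_det_add_inv hX hA hXA
  refine ((hA.mul hB).pow 2).mul_left_cancel ?_
  calc (A.det * B.det) ^ 2 * ((X + B⁻¹).det * (X - A⁻¹).det * (X + A⁻¹ - B⁻¹).det)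
      = (B.det * (X + B⁻¹).det) * (A.det * (X - A⁻¹).det) *
          (A.det * B.det * (X + A⁻¹ - B⁻¹).det) := by ring
    _ = -((B.det * A.det * (X + B⁻¹ - A⁻¹).det) * (B.det * (X - B⁻¹).det) *
          (A.det * (X + A⁻¹).det)) := by
        rw [h₁, h₂, h₃, h₄, h₅, h₆]
        linear_combination
          -c * ((f ᵥ* A.adjugate) ⬝ᵥ X.adjugate *ᵥ (B.adjugate *ᵥ e)) *
              swap (f ᵥ* B.adjugate) e f (A.adjugate *ᵥ e) -
            c * ((f ᵥ* B.adjugate) ⬝ᵥ X.adjugate *ᵥ (A.adjugate *ᵥ e)) *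
              swap f e (f ᵥ* A.adjugate) (B.adjugate *ᵥ e)
    _ = (A.det * B.det) ^ 2 *
          -((X + B⁻¹ - A⁻¹).det * (X - B⁻¹).det * (X + A⁻¹).det) := by ring

end Shift

theorem isUnit_det_smul_one_sub_of_notMem_spectrum {n R : Type*} [Fintype n] [DecidableEq n]
    [CommRing R] {A : Matrix n n R} {a : R} (ha : a ∉ spectrum R A) :
    IsUnit (a • 1 - A).det := by
  rw [← isUnit_iff_isUnit_det, ← Algebra.algebraMap_eq_smul_one]
  exact spectrum.notMem_iff.1 ha

theorem tau_three_term_product_general {n R : Type*} [Fintype n] [DecidableEq n] [CommRing R]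
    (X Z : Matrix n n R) (η : Rˣ) (lam₁ lam₂ : R)
    (hlam₁ : lam₁ ∉ spectrum R Z) (hlam₂ : lam₂ ∉ spectrum R Z)
    (τ : R → R → R)
    (hτ : ∀ x m, τ x m =
      (X + (x /ₚ η) • (lam₁ • (1 : Matrix n n R) - Z)⁻¹ +
        m • (lam₂ • (1 : Matrix n n R) - Z)⁻¹).det)
    (x₀ m₀ : R) (hroot : τ x₀ m₀ = 0)
    (X' : Matrix n n R)
    (hX' : X' = X + (x₀ /ₚ η) • (lam₁ • (1 : Matrix n n R) - Z)⁻¹ +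
      m₀ • (lam₂ • (1 : Matrix n n R) - Z)⁻¹)
    (e f : n → R) (hef : X' * Z - Z * X' + 1 = vecMulVec e f) :
    τ x₀ (m₀ + 1) * τ (x₀ - η) m₀ * τ (x₀ + η) (m₀ - 1) =
      -(τ (x₀ - η) (m₀ + 1) * τ x₀ (m₀ - 1) * τ (x₀ + η) m₀) := by
  set A := lam₁ • (1 : Matrix n n R) - Z with hA
  set B := lam₂ • (1 : Matrix n n R) - Z with hB
  have hτ' (a b : R) : τ (x₀ + a * η) (m₀ + b) = (X' + a • A⁻¹ + b • B⁻¹).det := by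
    rw [hτ, hX', ← Units.divp_add_divp_same, mul_divp_cancel, add_smul, add_smul]
    congr 1
    abel
  have hX'A : A * X' + 1 = X' * A + vecMulVec e f := by
    rw [← hef, hA, sub_mul, mul_sub, smul_one_mul, mul_smul_one]
    abel
  have hBA : B = A + (lam₂ - lam₁) • 1 := by
    rw [hA, hB, sub_smul]
    abel
  have h := det_add_inv_three_term_product (by rw [hX', ← hτ, hroot])
    (isUnit_det_smul_one_sub_of_notMem_spectrum hlam₁)
    (isUnit_det_smul_one_sub_of_notMem_spectrum hlam₂) hX'A hBA
  have h₁ := hτ' 0 1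
  have h₂ := hτ' (-1) 0
  have h₃ := hτ' 1 (-1)
  have h₄ := hτ' (-1) 1
  have h₅ := hτ' 0 (-1)
  have h₆ := hτ' 1 0
  simp only [zero_mul, one_mul, neg_mul, add_zero, zero_smul, one_smul, neg_smul,
    ← sub_eq_add_neg] at h₁ h₂ h₃ h₄ h₅ h₆
  rw [h₁, h₂, h₃, h₄, h₅, h₆, sub_add_eq_add_sub]
  exact h

/-- three-term product identity `τ(x₀, m₀+1)·τ(x₀−η, m₀)·τ(x₀+η, m₀−1) = −τ(x₀−η, m₀+1)·τ(x₀, m₀−1)·τ(x₀+η, m₀)`. -/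
theorem tau_three_term_product (n : ℕ) (hn : 1 ≤ n)
    (X Z : Matrix (Fin n) (Fin n) ℂ)
    (hrank : (X * Z - Z * X + 1).rank = 1)
    (η : ℂ) (hη : η ≠ 0)
    (lam₁ lam₂ : ℂ)
    (hlam₁ : lam₁ ∉ spectrum ℂ Z) (hlam₂ : lam₂ ∉ spectrum ℂ Z)
    (τ : ℂ → ℂ → ℂ)
    (hτ : ∀ x m : ℂ, τ x m =
      (X + (x / η) • (lam₁ • (1 : Matrix (Fin n) (Fin n) ℂ) - Z)⁻¹ +
        m • (lam₂ • (1 : Matrix (Fin n) (Fin n) ℂ) - Z)⁻¹).det)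
    (x₀ m₀ : ℂ) (hroot : τ x₀ m₀ = 0)
    (X' : Matrix (Fin n) (Fin n) ℂ)
    (hX' : X' = X + (x₀ / η) • (lam₁ • (1 : Matrix (Fin n) (Fin n) ℂ) - Z)⁻¹ +
        m₀ • (lam₂ • (1 : Matrix (Fin n) (Fin n) ℂ) - Z)⁻¹)
    (hrank' : (X' * Z - Z * X' + 1).rank = 1)
    (e f v w : Fin n → ℂ)
    (hef : X' * Z - Z * X' + 1 = vecMulVec e f)
    (hvw : X'.adjugate = vecMulVec v w)
    (hγμ : (w ⬝ᵥ e) * (f ⬝ᵥ v) ≠ 0) :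
    τ x₀ (m₀ + 1) * τ (x₀ - η) m₀ * τ (x₀ + η) (m₀ - 1) =
      -(τ (x₀ - η) (m₀ + 1) * τ x₀ (m₀ - 1) * τ (x₀ + η) m₀) := by
  exact tau_three_term_product_general X Z (Units.mk0 η hη) lam₁ lam₂ hlam₁ hlam₂ τ
    (by simpa only [divp_mk0] using hτ) x₀ m₀ hroot X' (by simpa only [divp_mk0] using hX') e f hef
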